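/- arXiv:2305.01811 — 3 statements merged into one kernel-verified Lean document; each statement's English description precedes it below -/
import Mathlib

section
/- Suppose that for i = 1,2 the closed-loop subsystem matrices A^i + B^i F^i are symmetric and Hurwitz (every complex eigenvalue has strictly negative real part), and that K has full column rank (K z ≠ 0 for every nonzero z ∈ ℝ^{n1+n2−k}). Then the composite closed-loop system matrix 𝒜 + ℬ F̄ K = K^T (Ā + B̄ F̄) K is symmetric and negative definite (z̄^T (𝒜 + ℬ F̄ K) z̄ < 0 for all nonzero z̄); in particular it is Hurwitz, so the composite closed-loop system ẋ̄ = (𝒜 + ℬ F̄ K) x̄ is asymptotically stable. -/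
open Matrix

/-- A real square matrix is Hurwitz if every complex eigenvalue has strictly
negative real part. -/
def IsHurwitz {n : Type*} [Fintype n] [DecidableEq n] (M : Matrix n n ℝ) : Prop :=
  ∀ μ ∈ spectrum ℂ (M.map (Complex.ofReal ·)), μ.re < 0

/-- The complex spectrum of a real symmetric matrix is its set of real eigenvalues. -/
theorem Matrix.IsHermitian.mem_spectrum_map_ofReal_iff {n : Type*} [Fintype n] [DecidableEq n]
    {M : Matrix n n ℝ} (hM : M.IsHermitian) {μ : ℂ} :
    μ ∈ spectrum ℂ (M.map (Complex.ofReal ·)) ↔ ∃ i, (hM.eigenvalues i : ℂ) = μ := by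
  have hchar : (M.map (Complex.ofReal ·)).charpoly =
      ∏ i, (Polynomial.X - Polynomial.C (hM.eigenvalues i : ℂ)) := by
    have h := M.charpoly_map Complex.ofRealHom
    rw [hM.charpoly_eq, Polynomial.map_prod] at h
    simp only [Polynomial.map_sub, Polynomial.map_X, Polynomial.map_C] at h
    exact h
  rw [Matrix.mem_spectrum_iff_isRoot_charpoly, hchar, Polynomial.IsRoot.def,
    Polynomial.eval_prod, Finset.prod_eq_zero_iff]
  simp [sub_eq_zero, eq_comm (a := μ)]

/-- A real symmetric matrix is Hurwitz if and only if it is negative definite. -/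
theorem Matrix.IsHermitian.isHurwitz_iff_posDef_neg {n : Type*} [Fintype n] [DecidableEq n]
    {M : Matrix n n ℝ} (hM : M.IsHermitian) : IsHurwitz M ↔ (-M).PosDef := by
  have hneg : (-M).map (Complex.ofReal ·) = -M.map (Complex.ofReal ·) := by
    ext; simp
  have hspec : ∀ μ : ℂ, μ ∈ spectrum ℂ (M.map (Complex.ofReal ·)) ↔
      ∃ i, (hM.neg.eigenvalues i : ℂ) = -μ := by
    intro μ
    rw [← hM.neg.mem_spectrum_map_ofReal_iff, hneg, ← spectrum.neg_eq, Set.neg_mem_neg]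
  rw [hM.neg.posDef_iff_eigenvalues_pos]
  constructor
  · intro h i
    simpa using h (-(hM.neg.eigenvalues i : ℂ)) ((hspec _).2 ⟨i, by simp⟩)
  · intro h μ hμ
    obtain ⟨i, hi⟩ := (hspec μ).1 hμ
    have hre := congrArg Complex.re hi
    simp only [Complex.ofReal_re, Complex.neg_re] at hre
    linarith [h i]

/-- A block diagonal matrix with positive definite diagonal blocks is positive definite. -/
theorem Matrix.PosDef.fromBlocks_diagonal {m n : Type*} [Fintype m] [Fintype n]
    {P : Matrix m m ℝ} {Q : Matrix n n ℝ} (hP : P.PosDef) (hQ : Q.PosDef) :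
    (Matrix.fromBlocks P 0 0 Q).PosDef := by
  refine .of_dotProduct_mulVec_pos (hP.1.fromBlocks (by simp) hQ.1) fun {x} hx => ?_
  obtain ⟨u, v, rfl⟩ : ∃ u v, x = Sum.elim u v := ⟨_, _, (Sum.elim_comp_inl_inr x).symm⟩
  have hu := hP.posSemidef.dotProduct_mulVec_nonneg u
  have hv := hQ.posSemidef.dotProduct_mulVec_nonneg v
  simp only [star_trivial] at hu hv
  simp only [star_trivial, fromBlocks_mulVec, Sum.elim_comp_inl, Sum.elim_comp_inr, zero_mulVec,
    add_zero, zero_add, sumElim_dotProduct_sumElim]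
  by_cases hu0 : u = 0
  · have hv0 : v ≠ 0 := by
      rintro rfl
      exact hx (by rw [hu0, Sum.elim_zero_zero])
    have := hQ.dotProduct_mulVec_pos hv0
    simp only [star_trivial] at this
    linarith
  · have := hP.dotProduct_mulVec_pos hu0
    simp only [star_trivial] at this
    linarith

/-- If the closed-loop subsystem matrices `Aⁱ + Bⁱ Fⁱ` are symmetric and
Hurwitz and `K` has full column rank, then the composite closed-loop system matrix
`𝒜 + ℬ F̄ K = Kᵀ (Ā + B̄ F̄) K` is symmetric and negative definite, and in particular
Hurwitz, so the composite closed-loop system is asymptotically stable. -/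
theorem composite_closed_loop_stability
    (n1 n2 m1 m2 k : ℕ) (hk : k ≤ min n1 n2)
    (A1 : Matrix (Fin n1) (Fin n1) ℝ) (A2 : Matrix (Fin n2) (Fin n2) ℝ)
    (B1 : Matrix (Fin n1) (Fin m1) ℝ) (B2 : Matrix (Fin n2) (Fin m2) ℝ)
    (F1 : Matrix (Fin m1) (Fin n1) ℝ) (F2 : Matrix (Fin m2) (Fin n2) ℝ)
    (K : Matrix (Fin n1 ⊕ Fin n2) (Fin (n1 + n2 - k)) ℝ)
    (hsym1 : (A1 + B1 * F1)ᵀ = A1 + B1 * F1)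
    (hsym2 : (A2 + B2 * F2)ᵀ = A2 + B2 * F2)
    (hhur1 : IsHurwitz (A1 + B1 * F1))
    (hhur2 : IsHurwitz (A2 + B2 * F2))
    (hK : ∀ z : Fin (n1 + n2 - k) → ℝ, z ≠ 0 → K *ᵥ z ≠ 0)
    (Abar : Matrix (Fin n1 ⊕ Fin n2) (Fin n1 ⊕ Fin n2) ℝ)
    (hA : Abar = Matrix.fromBlocks A1 0 0 A2)
    (Bbar : Matrix (Fin n1 ⊕ Fin n2) (Fin m1 ⊕ Fin m2) ℝ)
    (hB : Bbar = Matrix.fromBlocks B1 0 0 B2)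
    (Fbar : Matrix (Fin m1 ⊕ Fin m2) (Fin n1 ⊕ Fin n2) ℝ)
    (hF : Fbar = Matrix.fromBlocks F1 0 0 F2)
    (Acal : Matrix (Fin (n1 + n2 - k)) (Fin (n1 + n2 - k)) ℝ)
    (hAcal : Acal = Kᵀ * Abar * K)
    (Bcal : Matrix (Fin (n1 + n2 - k)) (Fin m1 ⊕ Fin m2) ℝ)
    (hBcal : Bcal = Kᵀ * Bbar) :
    (Acal + Bcal * (Fbar * K))ᵀ = Acal + Bcal * (Fbar * K) ∧
    (∀ z : Fin (n1 + n2 - k) → ℝ, z ≠ 0 →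
      z ⬝ᵥ ((Acal + Bcal * (Fbar * K)) *ᵥ z) < 0) ∧
    IsHurwitz (Acal + Bcal * (Fbar * K)) := by
  have hsymm1 : (A1 + B1 * F1).IsHermitian := by
    rwa [IsHermitian, conjTranspose_eq_transpose_of_trivial]
  have hsymm2 : (A2 + B2 * F2).IsHermitian := by
    rwa [IsHermitian, conjTranspose_eq_transpose_of_trivial]
  have hblock := (hsymm1.isHurwitz_iff_posDef_neg.1 hhur1).fromBlocks_diagonal
    (hsymm2.isHurwitz_iff_posDef_neg.1 hhur2)
  have hinj : Function.Injective K.mulVec := by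
    intro x y hxy
    by_contra hne
    exact hK (x - y) (sub_ne_zero.2 hne) (by rw [mulVec_sub, sub_eq_zero]; exact hxy)
  have heq : -(Acal + Bcal * (Fbar * K)) =
      Kᴴ * Matrix.fromBlocks (-(A1 + B1 * F1)) 0 0 (-(A2 + B2 * F2)) * K := by
    have hsum : Matrix.fromBlocks (-(A1 + B1 * F1)) 0 0 (-(A2 + B2 * F2)) =
        -(Abar + Bbar * Fbar) := by
      simp [hA, hB, hF, fromBlocks_multiply, fromBlocks_add, fromBlocks_neg]
    rw [hsum, hAcal, hBcal, conjTranspose_eq_transpose_of_trivial]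
    simp only [Matrix.mul_neg, Matrix.neg_mul, Matrix.mul_add, Matrix.add_mul, Matrix.mul_assoc]
  have hpos : (-(Acal + Bcal * (Fbar * K))).PosDef :=
    heq ▸ hblock.conjTranspose_mul_mul_same hinj
  have hsymm : (Acal + Bcal * (Fbar * K)).IsHermitian := by simpa using hpos.1.neg
  refine ⟨?_, fun z hz => ?_, hsymm.isHurwitz_iff_posDef_neg.2 hpos⟩
  · rwa [IsHermitian, conjTranspose_eq_transpose_of_trivial] at hsymm
  · simpa only [star_trivial, neg_mulVec, dotProduct_neg, Left.neg_pos_iff] using hpos.dotProduct_mulVec_pos hz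
end

section
/- The matrix X = P̄ K ∈ ℝ^{(n1+n2)×(n1+n2−k)}, built from the symmetric positive semidefinite solutions P^1, P^2 of the subsystem algebraic Riccati equations, is a solution of the Generalized Algebraic Riccati equation 0 = −X^T Ā K − K^T Ā^T X − 𝒬 + X^T B̄ R̄^{-1} B̄^T X. -/
open Matrix

/-- `X = P̄ K`, built from the symmetric positive semidefinite solutions
of the subsystem algebraic Riccati equations, solves the Generalized Algebraic Riccati
equation `0 = −Xᵀ Ā K − Kᵀ Āᵀ X − 𝒬 + Xᵀ B̄ R̄⁻¹ B̄ᵀ X`. -/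
theorem PbarK_solves_generalized_riccati
    (n1 n2 m1 m2 k : ℕ) (hk : k ≤ min n1 n2)
    (A1 : Matrix (Fin n1) (Fin n1) ℝ) (A2 : Matrix (Fin n2) (Fin n2) ℝ)
    (B1 : Matrix (Fin n1) (Fin m1) ℝ) (B2 : Matrix (Fin n2) (Fin m2) ℝ)
    (K : Matrix (Fin n1 ⊕ Fin n2) (Fin (n1 + n2 - k)) ℝ)
    (Q1 : Matrix (Fin n1) (Fin n1) ℝ) (Q2 : Matrix (Fin n2) (Fin n2) ℝ)
    (R1 : Matrix (Fin m1) (Fin m1) ℝ) (R2 : Matrix (Fin m2) (Fin m2) ℝ)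
    (hQ1 : Q1.PosSemidef) (hQ2 : Q2.PosSemidef)
    (hR1 : R1.PosDef) (hR2 : R2.PosDef)
    (P1 : Matrix (Fin n1) (Fin n1) ℝ) (P2 : Matrix (Fin n2) (Fin n2) ℝ)
    (hP1 : P1.PosSemidef) (hP2 : P2.PosSemidef)
    (hric1 : (0 : Matrix (Fin n1) (Fin n1) ℝ)
      = -(P1 * A1) - A1ᵀ * P1 - Q1 + P1 * B1 * R1⁻¹ * B1ᵀ * P1)
    (hric2 : (0 : Matrix (Fin n2) (Fin n2) ℝ)
      = -(P2 * A2) - A2ᵀ * P2 - Q2 + P2 * B2 * R2⁻¹ * B2ᵀ * P2)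
    (Abar : Matrix (Fin n1 ⊕ Fin n2) (Fin n1 ⊕ Fin n2) ℝ)
    (hA : Abar = Matrix.fromBlocks A1 0 0 A2)
    (Bbar : Matrix (Fin n1 ⊕ Fin n2) (Fin m1 ⊕ Fin m2) ℝ)
    (hB : Bbar = Matrix.fromBlocks B1 0 0 B2)
    (Rbar : Matrix (Fin m1 ⊕ Fin m2) (Fin m1 ⊕ Fin m2) ℝ)
    (hR : Rbar = Matrix.fromBlocks R1 0 0 R2)
    (Qcal : Matrix (Fin (n1 + n2 - k)) (Fin (n1 + n2 - k)) ℝ)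
    (hQcal : Qcal = Kᵀ * (Matrix.fromBlocks Q1 0 0 Q2) * K)
    (Pbar : Matrix (Fin n1 ⊕ Fin n2) (Fin n1 ⊕ Fin n2) ℝ)
    (hP : Pbar = Matrix.fromBlocks P1 0 0 P2)
    (X : Matrix (Fin n1 ⊕ Fin n2) (Fin (n1 + n2 - k)) ℝ)
    (hX : X = Pbar * K) :
    (0 : Matrix (Fin (n1 + n2 - k)) (Fin (n1 + n2 - k)) ℝ)
      = -(Xᵀ * Abar * K) - Kᵀ * Abarᵀ * X - Qcal + Xᵀ * Bbar * Rbar⁻¹ * Bbarᵀ * X := by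
  have hRinv : Rbar⁻¹ = fromBlocks R1⁻¹ 0 0 R2⁻¹ := by
    rw [hR]
    apply inv_eq_right_inv
    simp [fromBlocks_multiply, mul_nonsing_inv _ ((isUnit_iff_isUnit_det _).1 hR1.isUnit),
      mul_nonsing_inv _ ((isUnit_iff_isUnit_det _).1 hR2.isUnit)]
  have hPsymm : Pbarᵀ = Pbar := by
    have h1 : P1ᵀ = P1 := by simpa using hP1.isHermitian.eq
    have h2 : P2ᵀ = P2 := by simpa using hP2.isHermitian.eq
    rw [hP, fromBlocks_transpose, h1, h2, transpose_zero, transpose_zero]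
  have hric : -(Pbar * Abar) - Abarᵀ * Pbar - fromBlocks Q1 0 0 Q2
      + Pbar * Bbar * Rbar⁻¹ * Bbarᵀ * Pbar = 0 := by
    rw [hRinv, hP, hA, hB]
    simp only [fromBlocks_transpose, fromBlocks_multiply, fromBlocks_neg, sub_eq_add_neg,
      fromBlocks_add, transpose_zero, Matrix.mul_zero, Matrix.zero_mul, add_zero, zero_add,
      neg_zero] at hric1 hric2 ⊢
    rw [← hric1, ← hric2, fromBlocks_zero]
  calc (0 : Matrix (Fin (n1 + n2 - k)) (Fin (n1 + n2 - k)) ℝ)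
      = Kᵀ * (-(Pbar * Abar) - Abarᵀ * Pbar - fromBlocks Q1 0 0 Q2
          + Pbar * Bbar * Rbar⁻¹ * Bbarᵀ * Pbar) * K := by
        rw [hric, Matrix.mul_zero, Matrix.zero_mul]
    _ = _ := by
        rw [hX, hQcal, transpose_mul, hPsymm]
        simp only [Matrix.mul_add, Matrix.add_mul, Matrix.mul_sub, Matrix.sub_mul,
          Matrix.mul_neg, Matrix.neg_mul, Matrix.mul_assoc]
end

section
/- Let X ∈ ℝ^{(n1+n2)×(n1+n2−k)} be any solution of the Generalized Algebraic Riccati equation 0 = −X^T Ā K − K^T Ā^T X − 𝒬 + X^T B̄ R̄^{-1} B̄^T X. Then the square matrix 𝒴 = X K^T ∈ ℝ^{(n1+n2)×(n1+n2)} satisfies the constructed algebraic Riccati equation 0 = −𝒴^T (Ā K K^T) − (K K^T Ā^T) 𝒴 − K 𝒬 K^T + 𝒴^T B̄ R̄^{-1} B̄^T 𝒴. In particular, if P^1, P^2 are symmetric positive semidefinite solutions of the subsystem algebraic Riccati equations 0 = −P^i A^i − (A^i)^T P^i − Q^i + P^i B^i (R^i)^{-1} (B^i)^T P^i and 𝒫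 is a symmetric positive semidefinite solution of the composite algebraic Riccati equation 0 = −𝒫 𝒜 − 𝒜^T 𝒫 − 𝒬 + 𝒫 ℬ R̄^{-1} ℬ^T 𝒫, then both 𝒴 = P̄ K K^T and 𝒴 = K 𝒫 K^T satisfy the constructed algebraic Riccati equation. -/
open Matrix

/-- Multiplying the generalized Riccati equation by `K` and `Kᵀ` yields the constructed
Riccati equation for `X * Kᵀ`. -/
theorem constructed_riccati_of_generalized {n m p : Type*} [Fintype n] [Fintype m]
    [DecidableEq m] [Fintype p] (A : Matrix n n ℝ) (B : Matrix n m ℝ) (R : Matrix m m ℝ)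
    (K X : Matrix n p ℝ) (Q : Matrix p p ℝ)
    (h : 0 = -(Xᵀ * A * K) - Kᵀ * Aᵀ * X - Q + Xᵀ * B * R⁻¹ * Bᵀ * X) :
    0 = -((X * Kᵀ)ᵀ * (A * K * Kᵀ)) - (K * Kᵀ * Aᵀ) * (X * Kᵀ)
      - K * Q * Kᵀ + (X * Kᵀ)ᵀ * B * R⁻¹ * Bᵀ * (X * Kᵀ) := by
  have h' := congrArg (fun M => K * M * Kᵀ) h
  simpa only [Matrix.mul_add, Matrix.mul_sub, Matrix.mul_neg, Matrix.add_mul, Matrix.sub_mul,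
    Matrix.neg_mul, Matrix.transpose_mul, Matrix.transpose_transpose, Matrix.mul_zero,
    Matrix.zero_mul, Matrix.mul_assoc] using h'

theorem inv_fromBlocks_diagonal {m n : Type*} [Fintype m] [DecidableEq m] [Fintype n]
    [DecidableEq n] {R : Matrix m m ℝ} {S : Matrix n n ℝ} (hR : IsUnit R) (hS : IsUnit S) :
    (Matrix.fromBlocks R 0 0 S)⁻¹ = Matrix.fromBlocks R⁻¹ 0 0 S⁻¹ := by
  simpa using Matrix.inv_fromBlocks_zero₁₂_of_isUnit_iff R 0 S (iff_of_true hR hS)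

/-- If `X` solves the Generalized Algebraic Riccati equation, then
`𝒴 = X Kᵀ` solves the constructed algebraic Riccati equation
`0 = −𝒴ᵀ (Ā K Kᵀ) − (K Kᵀ Āᵀ) 𝒴 − K 𝒬 Kᵀ + 𝒴ᵀ B̄ R̄⁻¹ B̄ᵀ 𝒴`; in particular, both
`𝒴 = P̄ K Kᵀ` and `𝒴 = K 𝒫 Kᵀ` satisfy it when `P¹, P²` solve the subsystem Riccati
equations and `𝒫` solves the composite Riccati equation. -/
theorem constructed_riccati_solutions
    (n1 n2 m1 m2 k : ℕ) (hk : k ≤ min n1 n2)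
    (A1 : Matrix (Fin n1) (Fin n1) ℝ) (A2 : Matrix (Fin n2) (Fin n2) ℝ)
    (B1 : Matrix (Fin n1) (Fin m1) ℝ) (B2 : Matrix (Fin n2) (Fin m2) ℝ)
    (K : Matrix (Fin n1 ⊕ Fin n2) (Fin (n1 + n2 - k)) ℝ)
    (Q1 : Matrix (Fin n1) (Fin n1) ℝ) (Q2 : Matrix (Fin n2) (Fin n2) ℝ)
    (R1 : Matrix (Fin m1) (Fin m1) ℝ) (R2 : Matrix (Fin m2) (Fin m2) ℝ)
    (hQ1 : Q1.PosSemidef) (hQ2 : Q2.PosSemidef)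
    (hR1 : R1.PosDef) (hR2 : R2.PosDef)
    (P1 : Matrix (Fin n1) (Fin n1) ℝ) (P2 : Matrix (Fin n2) (Fin n2) ℝ)
    (Abar : Matrix (Fin n1 ⊕ Fin n2) (Fin n1 ⊕ Fin n2) ℝ)
    (hA : Abar = Matrix.fromBlocks A1 0 0 A2)
    (Bbar : Matrix (Fin n1 ⊕ Fin n2) (Fin m1 ⊕ Fin m2) ℝ)
    (hB : Bbar = Matrix.fromBlocks B1 0 0 B2)
    (Rbar : Matrix (Fin m1 ⊕ Fin m2) (Fin m1 ⊕ Fin m2) ℝ)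
    (hR : Rbar = Matrix.fromBlocks R1 0 0 R2)
    (Acal : Matrix (Fin (n1 + n2 - k)) (Fin (n1 + n2 - k)) ℝ)
    (hAcal : Acal = Kᵀ * Abar * K)
    (Bcal : Matrix (Fin (n1 + n2 - k)) (Fin m1 ⊕ Fin m2) ℝ)
    (hBcal : Bcal = Kᵀ * Bbar)
    (Qcal : Matrix (Fin (n1 + n2 - k)) (Fin (n1 + n2 - k)) ℝ)
    (hQcal : Qcal = Kᵀ * (Matrix.fromBlocks Q1 0 0 Q2) * K)
    (Pbar : Matrix (Fin n1 ⊕ Fin n2) (Fin n1 ⊕ Fin n2) ℝ)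
    (hP : Pbar = Matrix.fromBlocks P1 0 0 P2)
    (Pcal : Matrix (Fin (n1 + n2 - k)) (Fin (n1 + n2 - k)) ℝ) :
    (∀ X : Matrix (Fin n1 ⊕ Fin n2) (Fin (n1 + n2 - k)) ℝ,
      ((0 : Matrix (Fin (n1 + n2 - k)) (Fin (n1 + n2 - k)) ℝ)
        = -(Xᵀ * Abar * K) - Kᵀ * Abarᵀ * X - Qcal + Xᵀ * Bbar * Rbar⁻¹ * Bbarᵀ * X) →
      ((0 : Matrix (Fin n1 ⊕ Fin n2) (Fin n1 ⊕ Fin n2) ℝ)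
        = -((X * Kᵀ)ᵀ * (Abar * K * Kᵀ)) - (K * Kᵀ * Abarᵀ) * (X * Kᵀ)
          - K * Qcal * Kᵀ + (X * Kᵀ)ᵀ * Bbar * Rbar⁻¹ * Bbarᵀ * (X * Kᵀ))) ∧
    ((P1.PosSemidef ∧ P2.PosSemidef ∧
      ((0 : Matrix (Fin n1) (Fin n1) ℝ)
        = -(P1 * A1) - A1ᵀ * P1 - Q1 + P1 * B1 * R1⁻¹ * B1ᵀ * P1) ∧
      ((0 : Matrix (Fin n2) (Fin n2) ℝ)
        = -(P2 * A2) - A2ᵀ * P2 - Q2 + P2 * B2 * R2⁻¹ * B2ᵀ * P2)) →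
      ((0 : Matrix (Fin n1 ⊕ Fin n2) (Fin n1 ⊕ Fin n2) ℝ)
        = -((Pbar * K * Kᵀ)ᵀ * (Abar * K * Kᵀ)) - (K * Kᵀ * Abarᵀ) * (Pbar * K * Kᵀ)
          - K * Qcal * Kᵀ
          + (Pbar * K * Kᵀ)ᵀ * Bbar * Rbar⁻¹ * Bbarᵀ * (Pbar * K * Kᵀ))) ∧
    ((Pcal.PosSemidef ∧
      ((0 : Matrix (Fin (n1 + n2 - k)) (Fin (n1 + n2 - k)) ℝ)
        = -(Pcal * Acal) - Acalᵀ * Pcal - Qcal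
          + Pcal * Bcal * Rbar⁻¹ * Bcalᵀ * Pcal)) →
      ((0 : Matrix (Fin n1 ⊕ Fin n2) (Fin n1 ⊕ Fin n2) ℝ)
        = -((K * Pcal * Kᵀ)ᵀ * (Abar * K * Kᵀ)) - (K * Kᵀ * Abarᵀ) * (K * Pcal * Kᵀ)
          - K * Qcal * Kᵀ
          + (K * Pcal * Kᵀ)ᵀ * Bbar * Rbar⁻¹ * Bbarᵀ * (K * Pcal * Kᵀ))) := by
  have generalized := constructed_riccati_of_generalized Abar Bbar Rbar K
  refine ⟨fun X => generalized X Qcal, ?_, ?_⟩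
  · rintro ⟨hP1, hP2, h1, h2⟩
    have hP1t : P1ᵀ = P1 := by simpa using hP1.isHermitian.eq
    have hP2t : P2ᵀ = P2 := by simpa using hP2.isHermitian.eq
    have hPt : Pbarᵀ = Pbar := by simp [hP, Matrix.fromBlocks_transpose, hP1t, hP2t]
    have block : 0 = -(Pbar * Abar) - Abarᵀ * Pbar - Matrix.fromBlocks Q1 0 0 Q2
        + Pbar * Bbar * Rbar⁻¹ * Bbarᵀ * Pbar := by
      rw [hP, hA, hB, hR, inv_fromBlocks_diagonal hR1.isUnit hR2.isUnit]
      simp [Matrix.fromBlocks_transpose, Matrix.fromBlocks_multiply, Matrix.fromBlocks_neg,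
        Matrix.fromBlocks_add, sub_eq_add_neg] at h1 h2 ⊢
      simp [← h1, ← h2]
    refine generalized (Pbar * K) Qcal ?_
    have h' := congrArg (fun M => Kᵀ * M * K) block
    simpa only [hQcal, hPt, Matrix.mul_add, Matrix.mul_sub, Matrix.mul_neg, Matrix.add_mul,
      Matrix.sub_mul, Matrix.neg_mul, Matrix.transpose_mul, Matrix.mul_zero,
      Matrix.zero_mul, Matrix.mul_assoc] using h'
  · rintro ⟨hPcal, h⟩
    have hPt : Pcalᵀ = Pcal := by simpa using hPcal.isHermitian.eq
    refine generalized (K * Pcal) Qcal ?_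
    simpa only [hAcal, hBcal, hPt, Matrix.transpose_mul, Matrix.transpose_transpose,
      Matrix.mul_assoc] using h
end
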